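/- Fix an integer r ≥ 1 and set y_j = (x_{j+1} + x_{j-1})/x_j ∈ ℚ(x_1,…,x_r) for each integer j (indices modulo r); y_j = X(j,1) is the generalized cluster variable of the simple representation E_j. Then the family of Laurent monomials {∏_{j=1}^{r} y_j^{b_j} : b = (b_1,…,b_r) ∈ ℕ^r such that b_j = 0 for at least one j} is linearly independent over ℤ in ℚ(x_1,…,x_r); in particular these elements are pairwise distinct. (This is the linear independence of the set ℬ′(Q) = {X_{E(A,i)}}, where E(A,i) is the direct sum of the simples E_i, E_{i+1}, …, E_{i+r-2} with multiplicities given by a row of A, and X of a direct sum is the product of the X's of the summands.) -/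

import Mathlib

/-- The ambient field `ℚ(x_1, …, x_r)`, realized as the fraction field of the
polynomial ring over `ℚ` in variables indexed by `ZMod r` (so indices are
automatically read modulo `r`). -/
noncomputable abbrev CyclicField (r : ℕ) : Type :=
  FractionRing (MvPolynomial (ZMod r) ℚ)

/-- The variable `x_i` for `i : ℤ`, with `x_{i+r} = x_i`. -/
noncomputable def xv (r : ℕ) (i : ℤ) : CyclicField r :=
  algebraMap (MvPolynomial (ZMod r) ℚ) (CyclicField r) (MvPolynomial.X (i : ZMod r))

/-- The generalized cluster variable `X(l, n)` (the image of the indecomposable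
nilpotent representation `E_l[n]` under the Caldero–Chapoton map):
`X(l,0) = 1` and, for `n ≥ 1`,
`X(l,n) = x_{l+n}/x_l + Σ_{k=1}^{n-1} (x_{l+n}·x_{l+r-1})/(x_{l+k-1}·x_{l+k}) + x_{l+r-1}/x_{l+n-1}`. -/
noncomputable def Xgcv (r : ℕ) (l : ℤ) : ℕ → CyclicField r
  | 0 => 1
  | n + 1 =>
      xv r (l + n + 1) / xv r l
        + ∑ k ∈ Finset.Icc 1 n,
            (xv r (l + n + 1) * xv r (l + r - 1)) / (xv r (l + k - 1) * xv r (l + k))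
        + xv r (l + r - 1) / xv r (l + n)

/-!
For a nonnegative irreducible matrix `A` consider the ratios `y_j = (A x)_j / x_j`; the cluster
variables `X(j, 1)` are the case where `A` is the adjacency matrix of a cycle. Given an index `i`
and a positive vector `z`, put `B = diag(z)⁻¹ A` and let `x = (1 - t B)⁻¹ e_i`, a vector of power
series in `t`. Irreducibility makes every entry of `x` nonzero, and `x = e_i + t B x` says that at
this point `t y_j = z_j` for `j ≠ i`, whereas `t y_i = z_i (1 - 1 / x_i)` vanishes at `t = 0`.

If `P(y) = 0`, multiplying by `t ^ deg P` and setting `t = 0` shows that the leading form of `P`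
vanishes at `z` with `z_i` replaced by `0`. As `z` varies, this forces `X_i` to divide the leading
form, for every `i`; but if `P ≠ 0` and every monomial of `P` misses a variable, a monomial of the
leading form misses some `X_i`.
-/

open MvPolynomial

section LeadingForm

variable {σ k : Type*} [CommSemiring k]

theorem aeval_smul_of_isHomogeneous {S : Type*} [CommSemiring S] [Algebra k S]
    {P : MvPolynomial σ k} {n : ℕ} (hP : P.IsHomogeneous n) (t : S) (y : σ → S) :
    aeval (t • y) P = t ^ n * aeval y P := by
  simp only [aeval_def, eval₂_eq, Finset.mul_sum]
  refine Finset.sum_congr rfl fun d hd ↦ ?_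
  simp only [Pi.smul_apply, smul_eq_mul, mul_pow, Finset.prod_mul_distrib,
    Finset.prod_pow_eq_pow_sum, hP.degree_eq_sum_deg_support hd]
  ring

theorem dvd_aeval_homogeneousComponent_totalDegree {R L : Type*} [CommRing R] [CommSemiring L]
    [Algebra k R] [Algebra R L] [Algebra k L] [IsScalarTower k R L] [FaithfulSMul R L]
    {P : MvPolynomial σ k} {y : σ → L} (hy : aeval y P = 0) {t : R} {Y : σ → R}
    (hY : ∀ j, algebraMap R L t * y j = algebraMap R L (Y j)) :
    t ∣ aeval Y (homogeneousComponent P.totalDegree P) := by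
  set d := P.totalDegree
  have hcomp (m : ℕ) : algebraMap R L (aeval Y (homogeneousComponent m P)) =
      algebraMap R L t ^ m * aeval y (homogeneousComponent m P) := by
    rw [← aeval_smul_of_isHomogeneous (homogeneousComponent_isHomogeneous m P),
      ← aeval_algebraMap_apply]
    congr 2
    exact funext fun j ↦ (hY j).symm
  have hsum : ∑ m ∈ Finset.range (d + 1), t ^ (d - m) * aeval Y (homogeneousComponent m P) = 0 := by
    apply FaithfulSMul.algebraMap_injective R L
    calc algebraMap R L (∑ m ∈ Finset.range (d + 1),
          t ^ (d - m) * aeval Y (homogeneousComponent m P))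
        = ∑ m ∈ Finset.range (d + 1),
            algebraMap R L t ^ d * aeval y (homogeneousComponent m P) := by
          rw [map_sum]
          refine Finset.sum_congr rfl fun m hm ↦ ?_
          rw [map_mul, map_pow, hcomp, ← mul_assoc,
            pow_sub_mul_pow _ (Finset.mem_range_succ_iff.mp hm)]
      _ = algebraMap R L t ^ d * aeval y P := by
          rw [← Finset.mul_sum, ← map_sum, sum_homogeneousComponent]
      _ = algebraMap R L 0 := by rw [hy, mul_zero, map_zero]
  rw [Finset.sum_range_succ, Nat.sub_self, pow_zero, one_mul] at hsum
  refine (dvd_add_right (Finset.dvd_sum fun m hm ↦ ?_)).mp (hsum ▸ dvd_zero t)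
  exact (dvd_pow_self t (Nat.sub_ne_zero_of_lt (Finset.mem_range.mp hm))).mul_right _

end LeadingForm

section Specialization

-- `φ` need not be injective, so it does not extend to `K`; the relation is lifted to the
-- localization of `A` away from the kernel of `φ`, which embeds into `K` and maps to `L`.
theorem aeval_algHom_div_eq_zero {σ k A K L : Type*} [CommSemiring k] [CommRing A] [IsDomain A]
    [Algebra k A] [Field K] [Algebra A K] [IsFractionRing A K] [Algebra k K] [IsScalarTower k A K]
    [Field L] [Algebra k L] (φ : A →ₐ[k] L) {a b : σ → A} (hb : ∀ j, φ (b j) ≠ 0)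
    {P : MvPolynomial σ k}
    (hP : aeval (fun j ↦ algebraMap A K (a j) / algebraMap A K (b j)) P = 0) :
    aeval (fun j ↦ φ (a j) / φ (b j)) P = 0 := by
  let S : Submonoid A := (nonZeroDivisors L).comap φ
  have hφ (s : S) : IsUnit (φ s) := (mem_nonZeroDivisors_iff_ne_zero.mp s.2).isUnit
  have hS : S ≤ nonZeroDivisors A := fun s hs ↦
    mem_nonZeroDivisors_of_ne_zero fun h ↦ (hφ ⟨s, hs⟩).ne_zero (by simp only [h, map_zero])
  have hK (s : S) : IsUnit (IsScalarTower.toAlgHom k A K s) :=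
    IsLocalization.map_units K ⟨s.1, hS s.2⟩
  let toK : Localization S →ₐ[k] K := IsLocalization.liftAlgHom hK
  let toL : Localization S →ₐ[k] L := IsLocalization.liftAlgHom hφ
  have toK_injective : Function.Injective toK :=
    (IsLocalization.lift_injective_iff hK).mpr fun x y ↦ by
      rw [(IsLocalization.injective (Localization S) hS).eq_iff]
      exact (IsFractionRing.injective A K).eq_iff.symm
  let q (j : σ) : Localization S :=
    IsLocalization.mk' _ (a j) (⟨b j, mem_nonZeroDivisors_of_ne_zero (hb j)⟩ : S)
  have toK_q (j : σ) : toK (q j) = algebraMap A K (a j) / algebraMap A K (b j) :=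
    (IsLocalization.lift_mk'_spec ..).mpr (mul_div_cancel₀ _ (hK ⟨b j, _⟩).ne_zero).symm
  have toL_q (j : σ) : toL (q j) = φ (a j) / φ (b j) :=
    (IsLocalization.lift_mk'_spec ..).mpr (mul_div_cancel₀ _ (hb j)).symm
  have hq : aeval q P = 0 := toK_injective <| by
    rw [comp_aeval_apply, map_zero, ← hP]
    simp only [toK_q]
  simpa only [toL_q, hq, map_zero] using (comp_aeval_apply q toL P).symm

end Specialization

section DivisibilityByVariable

variable {σ k : Type*}

theorem X_dvd_sub_aeval_update_X_zero [CommRing k] [DecidableEq σ] (i : σ) (P : MvPolynomial σ k) :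
    X i ∣ P - aeval (Function.update X i (0 : MvPolynomial σ k)) P := by
  let I := Ideal.span {(X i : MvPolynomial σ k)}
  have hmk : (Ideal.Quotient.mkₐ k I).comp (aeval (Function.update X i 0)) =
      Ideal.Quotient.mkₐ k I := by
    ext j
    obtain rfl | hj := eq_or_ne j i
    · have hX : Ideal.Quotient.mk I (X j) = 0 :=
        Ideal.Quotient.eq_zero_iff_mem.mpr (Ideal.mem_span_singleton_self (X j))
      simp [hX]
    · simp [hj]
  exact Ideal.mem_span_singleton.mp (Ideal.Quotient.eq.mp (DFunLike.congr_fun hmk P).symm)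

theorem X_dvd_of_forall_pos_eval_update_zero_eq_zero [CommRing k] [LinearOrder k]
    [IsStrictOrderedRing k] [DecidableEq σ] {P : MvPolynomial σ k} {i : σ}
    (hP : ∀ z : σ → k, (∀ j, 0 < z j) → eval (Function.update z i 0) P = 0) :
    X i ∣ P := by
  have hzero : aeval (Function.update X i (0 : MvPolynomial σ k)) P = 0 := by
    refine funext_set (fun _ ↦ Set.Ioi (0 : k)) (fun _ ↦ Set.Ioi_infinite 0) fun z hz ↦ ?_
    have hupdate : (fun j ↦ eval z (Function.update X i (0 : MvPolynomial σ k) j)) =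
        Function.update z i 0 := by
      ext j
      obtain rfl | hj := eq_or_ne j i <;> simp [*]
    rw [map_zero, ← hP z fun j ↦ hz j (Set.mem_univ j), ← hupdate]
    exact comp_aeval_apply _ (aeval z) P
  simpa only [hzero, sub_zero] using X_dvd_sub_aeval_update_X_zero i P

theorem coeff_eq_zero_of_X_dvd [CommSemiring k] {P : MvPolynomial σ k} {i : σ} (hP : X i ∣ P)
    {m : σ →₀ ℕ} (hm : m i = 0) : coeff m P = 0 := by
  classical
  obtain ⟨Q, rfl⟩ := hP
  rw [coeff_X_mul', if_neg (Finsupp.notMem_support_iff.mpr hm)]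

end DivisibilityByVariable

section NeumannSeries

open PowerSeries (constantCoeff)

variable {V k : Type*} [Fintype V] [DecidableEq V]

/-- The Neumann series `∑ n, t ^ n B ^ n = (1 - t B)⁻¹` of a square matrix `B`, encoded as a matrix
of formal power series in `t`. Its columns are the points at which relations are specialized. -/
noncomputable def neumannSeries [Semiring k] (B : Matrix V V k) : Matrix V V (PowerSeries k) :=
  .of fun i j ↦ .mk fun n ↦ (B ^ n) i j

theorem neumannSeries_apply_eq_one_apply_add [Semiring k] (B : Matrix V V k) (i j : V) :
    neumannSeries B i j = (1 : Matrix V V (PowerSeries k)) i j +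
      PowerSeries.X * ∑ n, PowerSeries.C (B i n) * neumannSeries B n j := by
  ext m
  cases m with
  | zero => obtain rfl | hij := eq_or_ne i j <;> simp_all [neumannSeries]
  | succ m =>
    simp [neumannSeries, Matrix.one_apply, apply_ite, PowerSeries.coeff_succ_X_mul,
      PowerSeries.coeff_C_mul, Matrix.mul_apply, pow_succ']

theorem constantCoeff_neumannSeries_apply [Semiring k] (B : Matrix V V k) (i j : V) :
    constantCoeff (neumannSeries B i j) = (1 : Matrix V V k) i j := by
  simp [neumannSeries]

theorem X_mul_sum_C_mul_neumannSeries [Field k] (A : Matrix V V k) {z : V → k} (hz : ∀ j, z j ≠ 0)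
    (i j : V) :
    PowerSeries.X *
        ∑ n, PowerSeries.C (A j n) * neumannSeries (Matrix.diagonal z⁻¹ * A) n i =
      PowerSeries.C (z j) * (neumannSeries (Matrix.diagonal z⁻¹ * A) j i -
        (1 : Matrix V V (PowerSeries k)) j i) := by
  set B := Matrix.diagonal z⁻¹ * A with hB
  have hA (n : V) : A j n = z j * B j n := by
    rw [hB, Matrix.diagonal_mul, Pi.inv_apply, mul_inv_cancel_left₀ (hz j)]
  rw [neumannSeries_apply_eq_one_apply_add B j i, add_sub_cancel_left, mul_left_comm]
  simp only [hA, map_mul, mul_assoc, Finset.mul_sum]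

theorem neumannSeries_apply_ne_zero [Ring k] [LinearOrder k] [IsStrictOrderedRing k]
    {B : Matrix V V k} (hB : B.IsIrreducible) (i j : V) : neumannSeries B i j ≠ 0 := by
  obtain ⟨n, -, hn⟩ := (Matrix.isIrreducible_iff_exists_pow_pos hB.nonneg).mp hB i j
  intro h
  apply hn.ne'
  simpa [neumannSeries] using congr(PowerSeries.coeff n $h)

theorem isIrreducible_diagonal_mul [Ring k] [LinearOrder k] [IsStrictOrderedRing k]
    {A : Matrix V V k} (hA : A.IsIrreducible) {w : V → k} (hw : ∀ j, 0 < w j) :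
    (Matrix.diagonal w * A).IsIrreducible where
  nonneg i j := by
    rw [Matrix.diagonal_mul]
    exact mul_nonneg (hw i).le (hA.nonneg i j)
  connected := by
    have hquiver : (Matrix.diagonal w * A).toQuiver = A.toQuiver := by
      simp only [Matrix.toQuiver, Matrix.diagonal_mul, mul_pos_iff_of_pos_left (hw _)]
    exact hquiver ▸ hA.connected

theorem exists_powerSeries_scaled_eigenvector [Field k] [LinearOrder k] [IsStrictOrderedRing k]
    {A : Matrix V V k} (hA : A.IsIrreducible) {z : V → k} (hz : ∀ j, 0 < z j) (i : V) :
    ∃ x Y : V → PowerSeries k, (∀ j, x j ≠ 0) ∧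
      (∀ j, PowerSeries.X * ∑ n, PowerSeries.C (A j n) * x n = Y j * x j) ∧
      ∀ j, constantCoeff (Y j) = Function.update z i 0 j := by
  set x : V → PowerSeries k := fun j ↦ neumannSeries (Matrix.diagonal z⁻¹ * A) j i
  have x_ne_zero (j : V) : x j ≠ 0 :=
    neumannSeries_apply_ne_zero (isIrreducible_diagonal_mul hA fun j ↦ inv_pos.mpr (hz j)) j i
  have constantCoeff_x : constantCoeff (x i) = 1 := by
    rw [constantCoeff_neumannSeries_apply, Matrix.one_apply_eq]
  refine ⟨x, fun j ↦ PowerSeries.C (z j) *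
    (1 - (1 : Matrix V V (PowerSeries k)) j i * (x i)⁻¹), x_ne_zero, fun j ↦ ?_, fun j ↦ ?_⟩
  · rw [X_mul_sum_C_mul_neumannSeries A (fun j ↦ (hz j).ne') i j, mul_assoc]
    obtain rfl | hj := eq_or_ne j i
    · simp [x, sub_mul, PowerSeries.inv_mul_cancel, constantCoeff_x]
    · simp [x, hj]
  · obtain rfl | hj := eq_or_ne j i <;> simp [*]

end NeumannSeries

section NeighborRatio

variable {V k : Type*} [Fintype V] [Field k]

/-- The rational function `(A x)_j / x_j` in indeterminates `x_v`, `v ∈ V`, for a matrix `A` thought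
of as a weighted adjacency matrix. For a cycle it is the cluster variable `X(j, 1)`. -/
noncomputable def neighborRatio (A : Matrix V V k) (j : V) : FractionRing (MvPolynomial V k) :=
  algebraMap (MvPolynomial V k) _ (∑ n, C (A j n) * X n) / algebraMap (MvPolynomial V k) _ (X j)

theorem eval_constantCoeff_homogeneousComponent_totalDegree_eq_zero {A : Matrix V V k}
    {P : MvPolynomial V k} (hP : aeval (neighborRatio A) P = 0) {x Y : V → PowerSeries k}
    (hx : ∀ j, x j ≠ 0)
    (hY : ∀ j, PowerSeries.X * ∑ n, PowerSeries.C (A j n) * x n = Y j * x j) :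
    eval (fun j ↦ PowerSeries.constantCoeff (Y j)) (homogeneousComponent P.totalDegree P) = 0 := by
  let φ : MvPolynomial V k →ₐ[k] FractionRing (PowerSeries k) :=
    (IsScalarTower.toAlgHom k (PowerSeries k) _).comp (aeval x)
  have hφX (j : V) : φ (X j) ≠ 0 := by simpa [φ] using hx j
  have hφY (j : V) : algebraMap (PowerSeries k) _ PowerSeries.X *
      (φ (∑ n, C (A j n) * X n) / φ (X j)) = algebraMap (PowerSeries k) _ (Y j) := by
    have haeval : aeval x (∑ n, C (A j n) * X n) = ∑ n, PowerSeries.C (A j n) * x n := by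
      simp
    rw [mul_div_assoc', div_eq_iff (hφX j)]
    simp only [φ, AlgHom.comp_apply, IsScalarTower.coe_toAlgHom', aeval_X, haeval]
    rw [← map_mul, ← map_mul, hY]
  have hdvd : PowerSeries.X ∣ aeval Y (homogeneousComponent P.totalDegree P) :=
    dvd_aeval_homogeneousComponent_totalDegree (aeval_algHom_div_eq_zero φ hφX hP) hφY
  rw [PowerSeries.X_dvd_iff, map_aeval] at hdvd
  convert! hdvd

variable [LinearOrder k] [IsStrictOrderedRing k] {A : Matrix V V k}

theorem X_dvd_homogeneousComponent_totalDegree (hA : A.IsIrreducible) {P : MvPolynomial V k}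
    (hP : aeval (neighborRatio A) P = 0) (i : V) :
    X i ∣ homogeneousComponent P.totalDegree P := by
  classical
  refine X_dvd_of_forall_pos_eval_update_zero_eq_zero fun z hz ↦ ?_
  obtain ⟨x, Y, hx, hxY, hYz⟩ := exists_powerSeries_scaled_eigenvector hA hz i
  rw [← funext hYz]
  exact eval_constantCoeff_homogeneousComponent_totalDegree_eq_zero hP hx hxY

theorem eq_zero_of_aeval_neighborRatio_eq_zero (hA : A.IsIrreducible) {P : MvPolynomial V k}
    (hP : aeval (neighborRatio A) P = 0) (hsupp : ∀ m ∈ P.support, ∃ i, m i = 0) : P = 0 := by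
  by_contra hP0
  obtain ⟨m, hm, hdeg⟩ :=
    P.support.exists_mem_eq_sup (support_nonempty.mpr hP0) Finsupp.degree
  obtain ⟨i, hi⟩ := hsupp m hm
  have hcoeff := coeff_eq_zero_of_X_dvd (X_dvd_homogeneousComponent_totalDegree hA hP i) hi
  rw [coeff_homogeneousComponent, if_pos (show m.degree = P.totalDegree from hdeg.symm)] at hcoeff
  exact mem_support_iff.mp hm hcoeff

end NeighborRatio

theorem stmt12_general {V k : Type*} [Fintype V] [Field k] [LinearOrder k] [IsStrictOrderedRing k]
    {A : Matrix V V k} (hA : A.IsIrreducible) :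
    LinearIndependent k
      (fun b : {b : V → ℕ // ∃ j, b j = 0} => ∏ j, neighborRatio A j ^ b.1 j) := by
  let toMonomial (b : {b : V → ℕ // ∃ j, b j = 0}) : V →₀ ℕ := Finsupp.equivFunOnFinite.symm b.1
  have toMonomial_injective : Function.Injective toMonomial :=
    Finsupp.equivFunOnFinite.symm.injective.comp Subtype.val_injective
  have hmonomials : LinearIndependent k (basisMonomials V k ∘ toMonomial) :=
    (basisMonomials V k).linearIndependent.comp toMonomial toMonomial_injective
  have hspan : Submodule.span k (Set.range (basisMonomials V k ∘ toMonomial)) ≤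
      restrictSupport k {m | ∃ j, m j = 0} := by
    refine Submodule.span_le.mpr ?_
    rintro _ ⟨b, rfl⟩
    simp [toMonomial, b.2]
  convert! hmonomials.map (f := (aeval (neighborRatio A)).toLinearMap) <|
    Submodule.disjoint_def.mpr fun P hP hker ↦
      eq_zero_of_aeval_neighborRatio_eq_zero hA hker fun m hm ↦ hspan hP hm
  simp [toMonomial, aeval_monomial, Finsupp.prod_fintype]

section Cycle

theorem linearIndependent_prod_pow_comp_equiv {R M ι κ : Type*} [Semiring R] [CommSemiring M]
    [Module R M] [Fintype ι] [Fintype κ] (e : ι ≃ κ) {y : κ → M}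
    (hy : LinearIndependent R (fun b : {b : κ → ℕ // ∃ j, b j = 0} => ∏ j, y j ^ b.1 j)) :
    LinearIndependent R (fun b : {b : ι → ℕ // ∃ i, b i = 0} => ∏ i, y (e i) ^ b.1 i) := by
  let push (b : {b : ι → ℕ // ∃ i, b i = 0}) : {b : κ → ℕ // ∃ j, b j = 0} :=
    ⟨b.1 ∘ e.symm, b.2.imp' e (by simp)⟩
  have push_injective : Function.Injective push := fun b c hbc ↦
    Subtype.ext <| e.symm.surjective.injective_comp_right (congrArg Subtype.val hbc)
  simpa [Function.comp_def, push, ← e.prod_comp] using hy.comp push push_injective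

/-- The adjacency matrix of the cycle on `ZMod r`. The two neighbors `i ± 1` are counted with
multiplicity, so the entry is `2` where they coincide (`r ≤ 2`). -/
def cycleMatrix (r : ℕ) (k : Type*) [AddMonoidWithOne k] : Matrix (ZMod r) (ZMod r) k :=
  .of fun i j ↦ (if j = i + 1 then 1 else 0) + (if j = i - 1 then 1 else 0)

theorem isIrreducible_cycleMatrix (r : ℕ) [NeZero r] (k : Type*) [Ring k] [LinearOrder k]
    [IsStrictOrderedRing k] : (cycleMatrix r k).IsIrreducible := by
  have nonneg (i j : ZMod r) : 0 ≤ cycleMatrix r k i j := by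
    simp only [cycleMatrix, Matrix.of_apply]
    positivity
  have apply_add_one_pos (i : ZMod r) : 0 < cycleMatrix r k i (i + 1) := by
    simp only [cycleMatrix, Matrix.of_apply, if_true]
    positivity
  have pow_apply_pos (i : ZMod r) (n : ℕ) : 0 < (cycleMatrix r k ^ n) i (i + n) := by
    induction n with
    | zero => simp
    | succ n ih =>
      rw [pow_succ, Matrix.mul_apply, Nat.cast_succ, ← add_assoc]
      exact Finset.sum_pos'
        (fun j _ ↦ mul_nonneg (Matrix.pow_apply_nonneg nonneg n i j) (nonneg _ _))
        ⟨i + n, Finset.mem_univ _, mul_pos ih (apply_add_one_pos _)⟩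
  refine (Matrix.isIrreducible_iff_exists_pow_pos nonneg).mpr fun i j ↦
    ⟨(j - i).val + r, Nat.add_pos_right _ (NeZero.pos r), ?_⟩
  simpa using pow_apply_pos i ((j - i).val + r)

/-- The indexing `j ↦ j + 1` of `x_1, …, x_r` by `Fin r`, which starts from `0`. -/
def finEquivZModSucc (r : ℕ) [NeZero r] : Fin r ≃ ZMod r where
  toFun j := (j : ℕ) + 1
  invFun a := ⟨(a - 1).val, ZMod.val_lt _⟩
  left_inv j := by ext; simp [ZMod.val_cast_of_lt j.2]
  right_inv a := by simp

theorem neighborRatio_cycleMatrix_finEquivZModSucc (r : ℕ) [NeZero r] (j : Fin r) :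
    neighborRatio (cycleMatrix r ℚ) (finEquivZModSucc r j) =
      (xv r ((j : ℕ) + 1 + 1) + xv r ((j : ℕ) + 1 - 1)) / xv r ((j : ℕ) + 1) := by
  simp [neighborRatio, cycleMatrix, finEquivZModSucc, xv, add_mul, Finset.sum_add_distrib]

end Cycle

/-- with `y_j = (x_{j+1} + x_{j-1})/x_j = X(j, 1)`, the Laurent monomials
`∏_{j=1}^r y_j^{b_j}`, over those `b ∈ ℕ^r` having at least one vanishing coordinate,
form a `ℤ`-linearly independent family in `ℚ(x_1,…,x_r)`. -/
theorem stmt12 (r : ℕ) (hr : 1 ≤ r) :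
    LinearIndependent ℤ
      (fun b : {b : Fin r → ℕ // ∃ j, b j = 0} =>
        ∏ j : Fin r,
          ((xv r ((j : ℕ) + 1 + 1) + xv r ((j : ℕ) + 1 - 1)) / xv r ((j : ℕ) + 1)) ^ b.1 j) := by
  have : NeZero r := ⟨Nat.one_le_iff_ne_zero.mp hr⟩
  have : IsScalarTower ℤ ℚ (CyclicField r) :=
    AddCommGroup.intIsScalarTower (R := ℚ) (M := CyclicField r)
  simpa only [neighborRatio_cycleMatrix_finEquivZModSucc] using
    linearIndependent_prod_pow_comp_equiv (finEquivZModSucc r)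
      ((stmt12_general (isIrreducible_cycleMatrix r ℚ)).restrict_scalars' ℤ)
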